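/- Let t > 0, λ > 0, η₁ > 1, η₂ > 0, p, q > 0 with p + q = 1, and let U be a probability density on (0,∞) such that U(x) = B₁·x^{−A₃}·exp{A₂·√(log x)}·(log x)^{κ}·(1 + O((log x)^{−1/2})) as x → ∞ and U(x) = B̃₁·x^{Ã₃}·exp{Ã₂·√(log(1/x))}·(log(1/x))^{κ}·(1 + O((log(1/x))^{−1/2})) as x → 0, where B₁, B̃₁ > 0, A₂, Ã₂ ∈ ℝ, κ ∈ ℝ, A₃ > 2, Ã₃ > −1, and 1 + η₁ > A₃. Define D(x) = e^{−λt}·U(x) + (U ⋆_M H(t,·))(x) for x > 0. Then D(x) = [e^{−λt} + m_{A₃−1}(H(t,·))]·B₁·x^{−A₃}·exp{A₂·√(log x)}·(log x)^{κ}·(1 + O((log x)^{−1/2})) as x → ∞, where m_{A₃−1}(H(t,·)) = ∫_0^∞ x^{A₃−1} H(t,x) dx < ∞. -/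

import Mathlib

open Filter Asymptotics MeasureTheory

/-- `P_{n,k}` from Kou's double exponential jump model: `P_{n,n} = p^n` and, for
`1 ≤ k ≤ n−1`,
`P_{n,k} = Σ_{i=k}^{n−1} C(n−k−1, i−k) C(n,i) (η₁/(η₁+η₂))^{i−k} (η₂/(η₁+η₂))^{n−i} p^i q^{n−i}`. -/
noncomputable def Pcoef (η₁ η₂ p q : ℝ) (n k : ℕ) : ℝ :=
  if k = n then p ^ n
  else ∑ i ∈ Finset.Ico k n,
    ((n - k - 1).choose (i - k) : ℝ) * (n.choose i : ℝ) *
      (η₁ / (η₁ + η₂)) ^ (i - k) * (η₂ / (η₁ + η₂)) ^ (n - i) * p ^ i * q ^ (n - i)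

/-- `Q_{n,k}` from Kou's double exponential jump model: `Q_{n,n} = q^n` and, for
`1 ≤ k ≤ n−1`,
`Q_{n,k} = Σ_{i=k}^{n−1} C(n−k−1, i−k) C(n,i) (η₁/(η₁+η₂))^{n−i} (η₂/(η₁+η₂))^{i−k} p^{n−i} q^i`. -/
noncomputable def Qcoef (η₁ η₂ p q : ℝ) (n k : ℕ) : ℝ :=
  if k = n then q ^ n
  else ∑ i ∈ Finset.Ico k n,
    ((n - k - 1).choose (i - k) : ℝ) * (n.choose i : ℝ) *
      (η₁ / (η₁ + η₂)) ^ (n - i) * (η₂ / (η₁ + η₂)) ^ (i - k) * p ^ (n - i) * q ^ i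

/-- The Poisson weights `π_n = e^{−λt} (λt)^n / n!`. -/
noncomputable def poisCoef (lam t : ℝ) (n : ℕ) : ℝ :=
  Real.exp (-(lam * t)) * (lam * t) ^ n / (n.factorial : ℝ)

/-- `a_k = (η₁^{k+1}/k!) Σ_{n=k+1}^∞ π_n P_{n,k+1}` (the series is reindexed by
`n = m + (k+1)`, `m ≥ 0`). -/
noncomputable def aCoef (lam t η₁ η₂ p q : ℝ) (k : ℕ) : ℝ :=
  η₁ ^ (k + 1) / (k.factorial : ℝ) *
    ∑' m : ℕ, poisCoef lam t (m + (k + 1)) * Pcoef η₁ η₂ p q (m + (k + 1)) (k + 1)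

/-- `b_k = (η₂^{k+1}/k!) Σ_{n=k+1}^∞ π_n Q_{n,k+1}` (the series is reindexed by
`n = m + (k+1)`, `m ≥ 0`). -/
noncomputable def bCoef (lam t η₁ η₂ p q : ℝ) (k : ℕ) : ℝ :=
  η₂ ^ (k + 1) / (k.factorial : ℝ) *
    ∑' m : ℕ, poisCoef lam t (m + (k + 1)) * Qcoef η₁ η₂ p q (m + (k + 1)) (k + 1)

/-- `G₁(t,u) = Σ_{k=0}^∞ a_k u^k`. -/
noncomputable def G1 (lam t η₁ η₂ p q : ℝ) (u : ℝ) : ℝ :=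
  ∑' k : ℕ, aCoef lam t η₁ η₂ p q k * u ^ k

/-- `G₂(t,−u) = Σ_{k=0}^∞ b_k u^k`; `G2m lam t η₁ η₂ p q u` stands for `G₂(t,−u)`. -/
noncomputable def G2m (lam t η₁ η₂ p q : ℝ) (u : ℝ) : ℝ :=
  ∑' k : ℕ, bCoef lam t η₁ η₂ p q k * u ^ k

/-- `H₁(t,x) = G₁(t, log x)` for `x > 1`. -/
noncomputable def H1fun (lam t η₁ η₂ p q : ℝ) (x : ℝ) : ℝ :=
  G1 lam t η₁ η₂ p q (Real.log x)

/-- `H₂(t,x) = G₂(t, log x) = G2m(t, log(1/x))` for `0 < x < 1`. -/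
noncomputable def H2fun (lam t η₁ η₂ p q : ℝ) (x : ℝ) : ℝ :=
  G2m lam t η₁ η₂ p q (Real.log x⁻¹)

/-- The density of the absolutely continuous part of the law of the exponential compound
Poisson factor: `H(t,x) = H₁(t,x) x^{−η₁−1}` for `x > 1` and `H(t,x) = H₂(t,x) x^{η₂−1}`
for `0 < x < 1`. -/
noncomputable def Hfun (lam t η₁ η₂ p q : ℝ) (x : ℝ) : ℝ :=
  if 1 < x then H1fun lam t η₁ η₂ p q x * x ^ (-η₁ - 1)
  else H2fun lam t η₁ η₂ p q x * x ^ (η₂ - 1)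

/-- The Mellin convolution of two measurable functions on `(0,∞)`:
`f ⋆_M g (x) = ∫_0^∞ f(x/t) g(t) dt/t`. -/
noncomputable def mellinConv (f g : ℝ → ℝ) (x : ℝ) : ℝ :=
  ∫ t in Set.Ioi (0:ℝ), f (x / t) * g t / t

/-!
Write `U x ≈ B x^{-A} exp(A₂√(log x)) (log x)^κ`. The slowly varying factor satisfies a Potter-type
bound: as long as `x / y` stays above a threshold `X`, replacing `U (x / y)` by `y^A U x` costs a
relative error `O((log x)^{-1/2} e^{δ|log y|})`, uniformly in `y` and for any `δ > 0`. Integrating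
against `H(y) dy/y` yields the moment `m_{A-1}(H)` with the claimed error, provided the Mellin
transform of `H` converges on a strip around `A`. It does: since `P_{n,k} ≤ 1`, the coefficients of
`G₁` and `G₂` are `O(c^k / k!²)`, so both grow more slowly than any exponential and `H` is
`O(x^{-1-η₁+ε})` at infinity and `O(x^{η₂-1-ε})` at zero. In the remaining region `x / y < X` the
tail of `H` contributes only `O(x^{-1-η₁+ε})`.
-/

section Coefficients

open scoped Nat

variable {lam t η₁ η₂ p q : ℝ}

lemma choose_mul_pow_mul_pow_le_one {x y : ℝ} (hx : 0 ≤ x) (hy : 0 ≤ y) (hxy : x + y = 1)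
    {j m : ℕ} (hj : j ≤ m) : (m.choose j : ℝ) * (x ^ j * y ^ (m - j)) ≤ 1 := by
  calc (m.choose j : ℝ) * (x ^ j * y ^ (m - j)) = x ^ j * y ^ (m - j) * m.choose j := mul_comm _ _
    _ ≤ ∑ i ∈ Finset.range (m + 1), x ^ i * y ^ (m - i) * m.choose i :=
        Finset.single_le_sum (f := fun i => x ^ i * y ^ (m - i) * (m.choose i : ℝ))
          (fun i _ => by positivity) (Finset.mem_range_succ_iff.2 hj)
    _ = 1 := by rw [← add_pow, hxy, one_pow]

lemma Pcoef_nonneg (hη₁ : 0 < η₁) (hη₂ : 0 < η₂) (hp : 0 ≤ p) (hq : 0 ≤ q) (n k : ℕ) :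
    0 ≤ Pcoef η₁ η₂ p q n k := by
  unfold Pcoef
  split_ifs
  · positivity
  · exact Finset.sum_nonneg fun i _ => by positivity

lemma Pcoef_le_one (hη₁ : 0 < η₁) (hη₂ : 0 < η₂) (hp : 0 ≤ p) (hq : 0 ≤ q) (hpq : p + q = 1)
    (n k : ℕ) : Pcoef η₁ η₂ p q n k ≤ 1 := by
  unfold Pcoef
  split_ifs
  · exact pow_le_one₀ hp (by linarith)
  set r := η₁ / (η₁ + η₂)
  set s := η₂ / (η₁ + η₂)
  have hr : 0 ≤ r := by positivity
  have hs : 0 ≤ s := by positivity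
  have hrs : r + s = 1 := by rw [← add_div, div_self (by positivity)]
  have factor_le_one {i : ℕ} (hi : i ∈ Finset.Ico k n) :
      ((n - k - 1).choose (i - k) : ℝ) * (r ^ (i - k) * s ^ (n - i)) ≤ 1 := by
    obtain ⟨hki, hin⟩ := Finset.mem_Ico.1 hi
    rw [show n - i = n - k - 1 - (i - k) + 1 by omega, pow_succ, ← mul_assoc, ← mul_assoc,
      mul_assoc _ (r ^ _)]
    exact mul_le_one₀ (choose_mul_pow_mul_pow_le_one hr hs hrs (by omega)) hs (by linarith)
  calc _ ≤ ∑ i ∈ Finset.Ico k n, p ^ i * q ^ (n - i) * n.choose i := by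
        refine Finset.sum_le_sum fun i hi => ?_
        calc _ = (n - k - 1).choose (i - k) * (r ^ (i - k) * s ^ (n - i)) *
              (p ^ i * q ^ (n - i) * n.choose i) := by ring
          _ ≤ 1 * (p ^ i * q ^ (n - i) * n.choose i) := by gcongr; exact factor_le_one hi
          _ = _ := one_mul _
    _ ≤ ∑ i ∈ Finset.range (n + 1), p ^ i * q ^ (n - i) * n.choose i := by
        refine Finset.sum_le_sum_of_subset_of_nonneg (fun i hi => ?_) fun i _ _ => by positivity
        exact Finset.mem_range.2 ((Finset.mem_Ico.1 hi).2.trans n.lt_succ_self)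
    _ = 1 := by rw [← add_pow, hpq, one_pow]

lemma Qcoef_eq_Pcoef_swap (η₁ η₂ p q : ℝ) (n k : ℕ) :
    Qcoef η₁ η₂ p q n k = Pcoef η₂ η₁ q p n k := by
  unfold Qcoef Pcoef
  split_ifs
  · rfl
  · refine Finset.sum_congr rfl fun i _ => ?_
    rw [add_comm η₂ η₁]
    ring

lemma G2m_eq_G1_swap (lam t η₁ η₂ p q : ℝ) :
    G2m lam t η₁ η₂ p q = G1 lam t η₂ η₁ q p := by
  ext u
  simp only [G2m, G1, bCoef, aCoef, Qcoef_eq_Pcoef_swap]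

lemma poisCoef_nonneg (hlt : 0 ≤ lam * t) (n : ℕ) : 0 ≤ poisCoef lam t n := by
  unfold poisCoef
  positivity

lemma hasSum_poisCoef (lam t : ℝ) : HasSum (poisCoef lam t) 1 := by
  have hexp := (NormedSpace.expSeries_div_hasSum_exp (lam * t)).mul_left (Real.exp (-(lam * t)))
  rw [← Real.exp_eq_exp_ℝ, ← Real.exp_add, neg_add_cancel, Real.exp_zero] at hexp
  simpa only [← mul_div_assoc] using! hexp

lemma poisCoef_add_le (hlt : 0 ≤ lam * t) (m n : ℕ) :
    poisCoef lam t (m + n) ≤ (lam * t) ^ n / n ! * poisCoef lam t m := by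
  have hfact : (m ! : ℝ) * n ! ≤ (m + n)! := by
    exact_mod_cast Nat.le_of_dvd (Nat.factorial_pos _)
      (Nat.factorial_mul_factorial_dvd_factorial_add m n)
  calc poisCoef lam t (m + n)
      ≤ Real.exp (-(lam * t)) * (lam * t) ^ (m + n) / (m ! * n !) := by
        unfold poisCoef
        gcongr
    _ = (lam * t) ^ n / n ! * poisCoef lam t m := by
        unfold poisCoef
        field_simp
        ring

lemma aCoef_nonneg (hlt : 0 ≤ lam * t) (hη₁ : 0 < η₁) (hη₂ : 0 < η₂) (hp : 0 ≤ p) (hq : 0 ≤ q)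
    (k : ℕ) : 0 ≤ aCoef lam t η₁ η₂ p q k :=
  mul_nonneg (by positivity) <| tsum_nonneg fun _ =>
    mul_nonneg (poisCoef_nonneg hlt _) (Pcoef_nonneg hη₁ hη₂ hp hq _ _)

lemma abs_aCoef_le (hlt : 0 ≤ lam * t) (hη₁ : 0 < η₁) (hη₂ : 0 < η₂) (hp : 0 ≤ p) (hq : 0 ≤ q)
    (hpq : p + q = 1) (k : ℕ) :
    |aCoef lam t η₁ η₂ p q k| ≤
      η₁ * (lam * t) * ((η₁ * (lam * t)) ^ k / (k ! : ℝ) ^ 2) := by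
  have hseries := tsum_of_norm_bounded
    (f := fun m => poisCoef lam t (m + (k + 1)) * Pcoef η₁ η₂ p q (m + (k + 1)) (k + 1))
    ((hasSum_poisCoef lam t).mul_left ((lam * t) ^ (k + 1) / (k + 1)!)) fun m => by
      rw [Real.norm_of_nonneg
        (mul_nonneg (poisCoef_nonneg hlt _) (Pcoef_nonneg hη₁ hη₂ hp hq _ _))]
      exact (mul_le_of_le_one_right (poisCoef_nonneg hlt _)
        (Pcoef_le_one hη₁ hη₂ hp hq hpq _ _)).trans (poisCoef_add_le hlt _ _)
  rw [mul_one] at hseries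
  calc |aCoef lam t η₁ η₂ p q k|
      ≤ η₁ ^ (k + 1) / k ! * ((lam * t) ^ (k + 1) / (k + 1)!) := by
        rw [aCoef, abs_mul, abs_of_nonneg (by positivity)]
        gcongr
        exact hseries
    _ ≤ η₁ ^ (k + 1) / k ! * ((lam * t) ^ (k + 1) / k !) := by
        gcongr
        exact k.le_succ
    _ = η₁ * (lam * t) * ((η₁ * (lam * t)) ^ k / (k ! : ℝ) ^ 2) := by
        rw [div_mul_div_comm, ← mul_pow, pow_succ, ← sq]
        ring

end Coefficients

section EntireSeries

open scoped Nat Topology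

variable {a : ℕ → ℝ} {C c : ℝ}

lemma continuous_tsum_mul_pow (ha : ∀ u : ℝ, Summable fun k => a k * u ^ k) :
    Continuous fun u : ℝ => ∑' k, a k * u ^ k := by
  refine continuous_iff_continuousAt.2 fun u₀ => ?_
  have hcont : ContinuousOn (fun u : ℝ => ∑' k, a k * u ^ k) (Metric.ball 0 (|u₀| + 1)) := by
    refine continuousOn_tsum (fun k => by fun_prop) (ha (|u₀| + 1)).norm fun k u hu => ?_
    rw [norm_mul, norm_mul, norm_pow, norm_pow, Real.norm_of_nonneg (by positivity : 0 ≤ |u₀| + 1)]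
    gcongr
    exact (mem_ball_zero_iff.1 hu).le
  exact hcont.continuousAt (Metric.isOpen_ball.mem_nhds (by simp))

lemma norm_mul_pow_le (hc : 0 ≤ c) (ha : ∀ k, |a k| ≤ C * (c ^ k / (k ! : ℝ) ^ 2))
    {ε : ℝ} (hε : 0 < ε) (u : ℝ) (k : ℕ) :
    ‖a k * u ^ k‖ ≤ C * Real.exp (c / ε) * ((ε * |u|) ^ k / k !) := by
  have hC : 0 ≤ C := by simpa using (abs_nonneg _).trans (ha 0)
  rw [norm_mul, norm_pow, Real.norm_eq_abs, Real.norm_eq_abs]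
  calc |a k| * |u| ^ k ≤ C * (c ^ k / (k ! : ℝ) ^ 2) * |u| ^ k := by gcongr; exact ha k
    _ = C * ((c / ε) ^ k / k !) * ((ε * |u|) ^ k / k !) := by
        rw [div_pow, mul_pow]
        field_simp
    _ ≤ C * Real.exp (c / ε) * ((ε * |u|) ^ k / k !) := by
        gcongr
        exact Real.pow_div_factorial_le_exp _ (by positivity) k

lemma summable_mul_pow (hc : 0 ≤ c) (ha : ∀ k, |a k| ≤ C * (c ^ k / (k ! : ℝ) ^ 2)) (u : ℝ) :
    Summable fun k => a k * u ^ k :=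
  .of_norm_bounded ((Real.summable_pow_div_factorial _).mul_left _)
    (norm_mul_pow_le hc ha one_pos u)

lemma tsum_mul_pow_isBigO_exp (hc : 0 ≤ c) (ha : ∀ k, |a k| ≤ C * (c ^ k / (k ! : ℝ) ^ 2))
    {ε : ℝ} (hε : 0 < ε) :
    (fun u : ℝ => ∑' k, a k * u ^ k) =O[atTop] fun u => Real.exp (ε * u) := by
  refine .of_bound (C * Real.exp (c / ε)) ?_
  filter_upwards [eventually_ge_atTop 0] with u hu
  have hexp := (NormedSpace.expSeries_div_hasSum_exp (ε * |u|)).mul_left (C * Real.exp (c / ε))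
  rw [← Real.exp_eq_exp_ℝ, abs_of_nonneg hu] at hexp
  rw [Real.norm_of_nonneg (Real.exp_pos _).le]
  exact tsum_of_norm_bounded hexp fun k => by
    simpa only [abs_of_nonneg hu] using norm_mul_pow_le hc ha hε u k

end EntireSeries

section JumpDensity

open Set
open scoped Topology

variable {lam t η₁ η₂ p q : ℝ}

lemma G1_nonneg (hlt : 0 ≤ lam * t) (hη₁ : 0 < η₁) (hη₂ : 0 < η₂) (hp : 0 ≤ p) (hq : 0 ≤ q)
    {u : ℝ} (hu : 0 ≤ u) : 0 ≤ G1 lam t η₁ η₂ p q u :=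
  tsum_nonneg fun k => mul_nonneg (aCoef_nonneg hlt hη₁ hη₂ hp hq k) (pow_nonneg hu k)

lemma continuous_G1 (hlt : 0 ≤ lam * t) (hη₁ : 0 < η₁) (hη₂ : 0 < η₂) (hp : 0 ≤ p)
    (hq : 0 ≤ q) (hpq : p + q = 1) : Continuous (G1 lam t η₁ η₂ p q) :=
  continuous_tsum_mul_pow <|
    summable_mul_pow (mul_nonneg hη₁.le hlt) (abs_aCoef_le hlt hη₁ hη₂ hp hq hpq)

lemma G1_isBigO_exp (hlt : 0 ≤ lam * t) (hη₁ : 0 < η₁) (hη₂ : 0 < η₂) (hp : 0 ≤ p)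
    (hq : 0 ≤ q) (hpq : p + q = 1) {ε : ℝ} (hε : 0 < ε) :
    G1 lam t η₁ η₂ p q =O[atTop] fun u => Real.exp (ε * u) :=
  tsum_mul_pow_isBigO_exp (mul_nonneg hη₁.le hlt) (abs_aCoef_le hlt hη₁ hη₂ hp hq hpq) hε

lemma Hfun_of_one_lt {y : ℝ} (hy : 1 < y) :
    Hfun lam t η₁ η₂ p q y = G1 lam t η₁ η₂ p q (Real.log y) * y ^ (-η₁ - 1) :=
  if_pos hy

lemma Hfun_of_le_one {y : ℝ} (hy : y ≤ 1) :
    Hfun lam t η₁ η₂ p q y = G1 lam t η₂ η₁ q p (Real.log y⁻¹) * y ^ (η₂ - 1) := by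
  rw [Hfun, if_neg hy.not_gt, H2fun, G2m_eq_G1_swap]

lemma Hfun_nonneg (hlt : 0 ≤ lam * t) (hη₁ : 0 < η₁) (hη₂ : 0 < η₂) (hp : 0 ≤ p) (hq : 0 ≤ q)
    {y : ℝ} (hy : 0 < y) : 0 ≤ Hfun lam t η₁ η₂ p q y := by
  rcases lt_or_ge 1 y with hy1 | hy1
  · rw [Hfun_of_one_lt hy1]
    exact mul_nonneg (G1_nonneg hlt hη₁ hη₂ hp hq (Real.log_nonneg hy1.le)) (by positivity)
  · rw [Hfun_of_le_one hy1]
    exact mul_nonneg (G1_nonneg hlt hη₂ hη₁ hq hp (Real.log_nonneg ((one_le_inv₀ hy).2 hy1)))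
      (by positivity)

lemma Hfun_isBigO_atTop (hlt : 0 ≤ lam * t) (hη₁ : 0 < η₁) (hη₂ : 0 < η₂) (hp : 0 ≤ p)
    (hq : 0 ≤ q) (hpq : p + q = 1) {ε : ℝ} (hε : 0 < ε) :
    Hfun lam t η₁ η₂ p q =O[atTop] fun y => y ^ (-(1 + η₁ - ε)) := by
  have hG := (G1_isBigO_exp hlt hη₁ hη₂ hp hq hpq hε).comp_tendsto Real.tendsto_log_atTop
  refine (hG.mul (isBigO_refl (fun y : ℝ => y ^ (-η₁ - 1)) atTop)).congr' ?_ ?_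
  · filter_upwards [eventually_gt_atTop 1] with y hy using (Hfun_of_one_lt hy).symm
  · filter_upwards [eventually_gt_atTop 0] with y hy
    rw [Function.comp_apply, mul_comm ε, ← Real.rpow_def_of_pos hy, ← Real.rpow_add hy]
    ring_nf

lemma Hfun_isBigO_nhdsGT_zero (hlt : 0 ≤ lam * t) (hη₁ : 0 < η₁) (hη₂ : 0 < η₂) (hp : 0 ≤ p)
    (hq : 0 ≤ q) (hpq : p + q = 1) {ε : ℝ} (hε : 0 < ε) :
    Hfun lam t η₁ η₂ p q =O[𝓝[>] 0] fun y => y ^ (-(1 - η₂ + ε)) := by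
  have hG := (G1_isBigO_exp hlt hη₂ hη₁ hq hp (by rwa [add_comm]) hε).comp_tendsto
    (Real.tendsto_log_atTop.comp tendsto_inv_nhdsGT_zero)
  refine (hG.mul (isBigO_refl (fun y : ℝ => y ^ (η₂ - 1)) (𝓝[>] 0))).congr' ?_ ?_
  · filter_upwards [Ioc_mem_nhdsGT one_pos] with y hy using (Hfun_of_le_one hy.2).symm
  · filter_upwards [self_mem_nhdsWithin] with y (hy : 0 < y)
    rw [Function.comp_apply, Function.comp_apply, Real.log_inv, mul_neg, ← neg_mul, mul_comm (-ε),
      ← Real.rpow_def_of_pos hy, ← Real.rpow_add hy]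
    ring_nf

lemma locallyIntegrableOn_Hfun (hlt : 0 ≤ lam * t) (hη₁ : 0 < η₁) (hη₂ : 0 < η₂) (hp : 0 ≤ p)
    (hq : 0 ≤ q) (hpq : p + q = 1) : LocallyIntegrableOn (Hfun lam t η₁ η₂ p q) (Ioi 0) := by
  have hG₁ := continuous_G1 hlt hη₁ hη₂ hp hq hpq
  have hG₂ := continuous_G1 hlt hη₂ hη₁ hq hp (by rwa [add_comm])
  rw [locallyIntegrableOn_iff isOpen_Ioi.isLocallyClosed]
  intro K hK0 hK
  have hne : ∀ y ∈ K, y ≠ 0 := fun y hy => (hK0 hy).ne'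
  have hright : ContinuousOn
      (fun y : ℝ => G1 lam t η₁ η₂ p q (Real.log y) * y ^ (-η₁ - 1)) K :=
    (hG₁.comp_continuousOn (Real.continuousOn_log.mono hne)).mul
      (continuousOn_id.rpow_const fun y hy => Or.inl (hne y hy))
  have hleft : ContinuousOn
      (fun y : ℝ => G1 lam t η₂ η₁ q p (Real.log y⁻¹) * y ^ (η₂ - 1)) K := by
    simp only [Real.log_inv]
    exact (hG₂.comp_continuousOn (Real.continuousOn_log.mono hne).neg).mul
      (continuousOn_id.rpow_const fun y hy => Or.inl (hne y hy))
  classical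
  refine (Integrable.piecewise (measurableSet_Ioi (a := 1))
    (hright.integrableOn_compact hK).integrableOn
    (hleft.integrableOn_compact hK).integrableOn).congr (.of_forall fun y => ?_)
  rcases lt_or_ge 1 y with hy | hy
  · exact (piecewise_eq_of_mem _ _ _ hy).trans (Hfun_of_one_lt hy).symm
  · exact (piecewise_eq_of_notMem _ _ _ hy.not_gt).trans (Hfun_of_le_one hy).symm

end JumpDensity

section HestonTail

lemma abs_log_sub_log_le {a b : ℝ} (ha : 1 ≤ a) (hb : 1 ≤ b) :
    |Real.log a - Real.log b| ≤ |a - b| := by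
  wlog hab : b ≤ a generalizing a b
  · rw [abs_sub_comm, abs_sub_comm a]
    exact this hb ha (le_of_not_ge hab)
  have hb0 : 0 < b := one_pos.trans_le hb
  rw [abs_of_nonneg (sub_nonneg.2 (Real.log_le_log hb0 hab)), abs_of_nonneg (sub_nonneg.2 hab),
    ← Real.log_div (hb0.trans_le hab).ne' hb0.ne']
  calc Real.log (a / b) ≤ a / b - 1 := Real.log_le_sub_one_of_pos (div_pos (hb0.trans_le hab) hb0)
    _ = (a - b) / b := by rw [sub_div, div_self hb0.ne']
    _ ≤ a - b := div_le_self (sub_nonneg.2 hab) hb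

lemma abs_sqrt_sub_sqrt_le {a b : ℝ} (ha : 0 ≤ a) (hb : 0 < b) :
    |√a - √b| ≤ |a - b| / √b := by
  have hb' : 0 < √b := Real.sqrt_pos.2 hb
  rw [le_div_iff₀ hb']
  calc |√a - √b| * √b ≤ |√a - √b| * (√a + √b) := by
        gcongr
        exact le_add_of_nonneg_left (Real.sqrt_nonneg a)
    _ = |(√a - √b) * (√a + √b)| := by rw [abs_mul, abs_of_pos (a := √a + √b) (by positivity)]
    _ = |a - b| := by rw [mul_comm, ← sq_sub_sq, Real.sq_sqrt ha, Real.sq_sqrt hb.le]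

lemma abs_exp_sub_exp_le (a b : ℝ) :
    |Real.exp a - Real.exp b| ≤ Real.exp b * (|a - b| * Real.exp |a - b|) := by
  have h : |Real.exp (a - b) - 1| ≤ |a - b| * Real.exp |a - b| := by
    have hcomplex := Complex.norm_exp_sub_sum_le_norm_mul_exp ((a - b : ℝ) : ℂ) 1
    simp only [Finset.sum_range_one, pow_zero, Nat.factorial_zero, Nat.cast_one, div_one,
      pow_one, Complex.norm_real, Real.norm_eq_abs] at hcomplex
    rwa [← Complex.ofReal_exp, ← Complex.ofReal_one, ← Complex.ofReal_sub, Complex.norm_real,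
      Real.norm_eq_abs] at hcomplex
  calc |Real.exp a - Real.exp b| = |Real.exp b * (Real.exp (a - b) - 1)| := by
        rw [mul_sub, ← Real.exp_add, add_sub_cancel, mul_one]
    _ = Real.exp b * |Real.exp (a - b) - 1| := by rw [abs_mul, Real.abs_exp]
    _ ≤ Real.exp b * (|a - b| * Real.exp |a - b|) := by gcongr

/-- The exponent `A₂√s + κ log s` of the slowly varying factor `exp(A₂√s) s^κ` of a Heston tail,
in the logarithmic variable `s = log x`. -/
noncomputable def tailExponent (A₂ κ s : ℝ) : ℝ :=
  A₂ * √s + κ * Real.log s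

/-- The Heston tail profile `x^{−A} exp(A₂√(log x)) (log x)^κ` at infinity, without its constant
factor. The relative error `(log x)^{−1/2}` amounts to replacing `κ` by `κ − 1/2`. -/
noncomputable def hestonTail (A A₂ κ x : ℝ) : ℝ :=
  x ^ (-A) * Real.exp (A₂ * √(Real.log x)) * Real.log x ^ κ

variable {A A₂ κ δ : ℝ}

lemma hestonTail_eq_rpow_mul_exp {x : ℝ} (hx : 1 < x) :
    hestonTail A A₂ κ x = x ^ (-A) * Real.exp (tailExponent A₂ κ (Real.log x)) := by
  rw [hestonTail, tailExponent, Real.exp_add, mul_assoc,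
    Real.rpow_def_of_pos (Real.log_pos hx), mul_comm κ]

lemma hestonTail_pos {x : ℝ} (hx : 1 < x) : 0 < hestonTail A A₂ κ x := by
  rw [hestonTail_eq_rpow_mul_exp hx]
  have : 0 < x := one_pos.trans hx
  positivity

lemma hestonTail_sub {x : ℝ} (hx : 1 < x) (μ : ℝ) :
    hestonTail A A₂ (κ - μ) x = hestonTail A A₂ κ x * Real.log x ^ (-μ) := by
  rw [hestonTail, hestonTail, sub_eq_add_neg, Real.rpow_add (Real.log_pos hx), mul_assoc,
    mul_assoc, mul_assoc]

lemma hestonTail_sub_half {x : ℝ} (hx : 1 < x) :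
    hestonTail A A₂ (κ - 1 / 2) x = hestonTail A A₂ κ x / √(Real.log x) := by
  rw [hestonTail_sub hx, Real.rpow_neg (Real.log_pos hx).le, ← Real.sqrt_eq_rpow, div_eq_mul_inv]

lemma hestonTail_div {x y : ℝ} (hx : 0 < x) (hy : 0 < y) (hxy : 1 < x / y) :
    hestonTail A A₂ κ (x / y) =
      x ^ (-A) * y ^ A * Real.exp (tailExponent A₂ κ (Real.log (x / y))) := by
  rw [hestonTail_eq_rpow_mul_exp hxy, Real.div_rpow hx.le hy.le, Real.rpow_neg hy.le,
    div_inv_eq_mul]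

lemma abs_log_div_sub_log {x y : ℝ} (hx : 0 < x) (hy : 0 < y) :
    |Real.log (x / y) - Real.log x| = |Real.log y| := by
  rw [Real.log_div hx.ne' hy.ne', sub_sub_cancel_left, abs_neg]

lemma abs_tailExponent_sub_le {s L : ℝ} (hs : 1 ≤ s) (hL : 1 ≤ L) :
    |tailExponent A₂ κ s - tailExponent A₂ κ L| ≤ (|A₂| + 2 * |κ|) * (|s - L| / √L) := by
  have log_eq {z : ℝ} (hz : 1 ≤ z) : Real.log z = 2 * Real.log √z := by
    rw [Real.log_sqrt (by linarith), mul_div_cancel₀ _ two_ne_zero]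
  have hsqrt := abs_sqrt_sub_sqrt_le (by linarith : 0 ≤ s) (by linarith : 0 < L)
  have hlog := (abs_log_sub_log_le (Real.one_le_sqrt.2 hs) (Real.one_le_sqrt.2 hL)).trans hsqrt
  calc |tailExponent A₂ κ s - tailExponent A₂ κ L|
      = |A₂ * (√s - √L) + 2 * κ * (Real.log √s - Real.log √L)| := by
        rw [tailExponent, tailExponent, log_eq hs, log_eq hL]
        ring_nf
    _ ≤ |A₂| * |√s - √L| + 2 * |κ| * |Real.log √s - Real.log √L| := by
        refine (abs_add_le _ _).trans_eq ?_
        rw [abs_mul, abs_mul, abs_mul, abs_two]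
    _ ≤ |A₂| * (|s - L| / √L) + 2 * |κ| * (|s - L| / √L) := by gcongr
    _ = (|A₂| + 2 * |κ|) * (|s - L| / √L) := by ring

lemma eventually_abs_tailExponent_sub_le (A₂ κ : ℝ) (hδ : 0 < δ) :
    ∀ᶠ L in atTop, ∀ s, 1 ≤ s → |tailExponent A₂ κ s - tailExponent A₂ κ L| ≤ δ * |s - L| := by
  have hlim : Tendsto (fun L : ℝ => (|A₂| + 2 * |κ|) / √L) atTop (nhds 0) :=
    tendsto_const_nhds.div_atTop Real.tendsto_sqrt_atTop
  filter_upwards [hlim.eventually_le_const hδ, eventually_ge_atTop 1] with L hLδ hL s hs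
  calc |tailExponent A₂ κ s - tailExponent A₂ κ L|
      ≤ (|A₂| + 2 * |κ|) * (|s - L| / √L) := abs_tailExponent_sub_le hs hL
    _ = (|A₂| + 2 * |κ|) / √L * |s - L| := by ring
    _ ≤ δ * |s - L| := by gcongr

lemma one_lt_of_exp_one_le {z : ℝ} (hz : Real.exp 1 ≤ z) : 1 < z :=
  (Real.one_lt_exp_iff.2 one_pos).trans_le hz

lemma one_le_log_of_exp_one_le {z : ℝ} (hz : Real.exp 1 ≤ z) : 1 ≤ Real.log z :=
  (Real.le_log_iff_exp_le (one_pos.trans (one_lt_of_exp_one_le hz))).2 hz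

lemma eventually_hestonTail_div_le (A A₂ κ : ℝ) (hδ : 0 < δ) :
    ∀ᶠ x in atTop, ∀ y, 0 < y → Real.exp 1 ≤ x / y →
      hestonTail A A₂ κ (x / y) ≤
        hestonTail A A₂ κ x * (y ^ A * Real.exp (δ * |Real.log y|)) := by
  filter_upwards [eventually_gt_atTop 1,
    Real.tendsto_log_atTop.eventually (eventually_abs_tailExponent_sub_le A₂ κ hδ)]
    with x hx hexponent y hy hxy
  have hx0 : 0 < x := one_pos.trans hx
  have hle := le_of_abs_le (hexponent _ (one_le_log_of_exp_one_le hxy))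
  rw [abs_log_div_sub_log hx0 hy, sub_le_iff_le_add'] at hle
  calc hestonTail A A₂ κ (x / y)
      = x ^ (-A) * y ^ A * Real.exp (tailExponent A₂ κ (Real.log (x / y))) :=
        hestonTail_div hx0 hy (one_lt_of_exp_one_le hxy)
    _ ≤ x ^ (-A) * y ^ A *
          Real.exp (tailExponent A₂ κ (Real.log x) + δ * |Real.log y|) := by gcongr
    _ = hestonTail A A₂ κ x * (y ^ A * Real.exp (δ * |Real.log y|)) := by
        rw [hestonTail_eq_rpow_mul_exp hx, Real.exp_add]
        ring

lemma le_exp_mul_div {ε : ℝ} (hε : 0 < ε) (r : ℝ) : r ≤ Real.exp (ε * r) / ε := by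
  rw [le_div_iff₀ hε, mul_comm]
  exact (le_add_of_nonneg_right zero_le_one).trans (Real.add_one_le_exp _)

lemma eventually_abs_hestonTail_div_sub_le (A A₂ κ : ℝ) (hδ : 0 < δ) :
    ∀ᶠ x in atTop, ∀ y, 0 < y → Real.exp 1 ≤ x / y →
      |hestonTail A A₂ κ (x / y) - hestonTail A A₂ κ x * y ^ A| ≤
        (|A₂| + 2 * |κ|) / (δ / 2) * hestonTail A A₂ (κ - 1 / 2) x *
          (y ^ A * Real.exp (δ * |Real.log y|)) := by
  filter_upwards [eventually_ge_atTop (Real.exp 1), Real.tendsto_log_atTop.eventually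
    (eventually_abs_tailExponent_sub_le A₂ κ (half_pos hδ))] with x hx hexponent y hy hxy
  have hx1 : 1 < x := one_lt_of_exp_one_le hx
  have hx0 : 0 < x := one_pos.trans hx1
  have hsmall := hexponent _ (one_le_log_of_exp_one_le hxy)
  have hlipschitz := abs_tailExponent_sub_le (A₂ := A₂) (κ := κ)
    (one_le_log_of_exp_one_le hxy) (one_le_log_of_exp_one_le hx)
  rw [abs_log_div_sub_log hx0 hy] at hsmall hlipschitz
  set g := tailExponent A₂ κ (Real.log x)
  set K := |A₂| + 2 * |κ|
  set l := |Real.log y|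
  set r := √(Real.log x)
  calc |hestonTail A A₂ κ (x / y) - hestonTail A A₂ κ x * y ^ A|
      = x ^ (-A) * y ^ A *
          |Real.exp (tailExponent A₂ κ (Real.log (x / y))) - Real.exp g| := by
        rw [hestonTail_div hx0 hy (one_lt_of_exp_one_le hxy), hestonTail_eq_rpow_mul_exp hx1,
          mul_right_comm _ _ (y ^ A), ← mul_sub, abs_mul, abs_of_pos (by positivity)]
    _ ≤ x ^ (-A) * y ^ A * (Real.exp g * (K * (l / r) * Real.exp (δ / 2 * l))) := by
        gcongr
        exact (abs_exp_sub_exp_le _ _).trans (by gcongr)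
    _ ≤ x ^ (-A) * y ^ A *
          (Real.exp g * (K * (Real.exp (δ / 2 * l) / (δ / 2) / r) * Real.exp (δ / 2 * l))) := by
        gcongr
        exact le_exp_mul_div (half_pos hδ) l
    _ = K / (δ / 2) * hestonTail A A₂ (κ - 1 / 2) x * (y ^ A * Real.exp (δ * l)) := by
        rw [hestonTail_sub_half hx1, hestonTail_eq_rpow_mul_exp hx1,
          show δ * l = δ / 2 * l + δ / 2 * l by ring, Real.exp_add]
        ring

lemma eventually_hestonTail_le_of_div_lt (A A₂ κ : ℝ) (hδ : 0 < δ) {X : ℝ} (hX : 0 < X) :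
    ∀ᶠ x in atTop, ∀ y, 0 < y → x / y < X →
      hestonTail A A₂ κ x ≤
        X ^ δ / δ * hestonTail A A₂ (κ - 1 / 2) x * Real.exp (δ * |Real.log y|) := by
  filter_upwards [eventually_ge_atTop (Real.exp 1)] with x hx y hy hxy
  have hx1 : 1 < x := one_lt_of_exp_one_le hx
  have hL := one_le_log_of_exp_one_le hx
  have : 0 < √(Real.log x) := by positivity
  have hlog : Real.log x ≤ Real.log X + |Real.log y| := by
    have hx0 : 0 < x := one_pos.trans hx1
    have := Real.log_le_log (by positivity) hxy.le
    rw [Real.log_div hx0.ne' hy.ne'] at this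
    linarith [le_abs_self (Real.log y)]
  have hsqrt_le : √(Real.log x) ≤ X ^ δ / δ * Real.exp (δ * |Real.log y|) :=
    calc √(Real.log x) ≤ Real.log x := Real.sqrt_le_self_iff.2 (Or.inr hL)
      _ ≤ Real.exp (δ * Real.log x) / δ := le_exp_mul_div hδ _
      _ ≤ Real.exp (δ * (Real.log X + |Real.log y|)) / δ := by gcongr
      _ = X ^ δ / δ * Real.exp (δ * |Real.log y|) := by
          rw [mul_add, Real.exp_add, mul_comm δ (Real.log X), ← Real.rpow_def_of_pos hX]
          ring
  calc hestonTail A A₂ κ x = hestonTail A A₂ κ x / √(Real.log x) * √(Real.log x) := by field_simp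
    _ ≤ hestonTail A A₂ κ x / √(Real.log x) * (X ^ δ / δ * Real.exp (δ * |Real.log y|)) := by
        have := hestonTail_pos (A := A) (A₂ := A₂) (κ := κ) hx1
        gcongr
    _ = X ^ δ / δ * hestonTail A A₂ (κ - 1 / 2) x * Real.exp (δ * |Real.log y|) := by
        rw [hestonTail_sub_half hx1]
        ring

lemma rpow_neg_isBigO_hestonTail {s : ℝ} (hs : A < s) :
    (fun x : ℝ => x ^ (-s)) =O[atTop] hestonTail A A₂ κ := by
  refine .of_bound (Real.exp (-A₂)) ?_
  filter_upwards [eventually_ge_atTop (Real.exp 1), Real.tendsto_log_atTop.eventually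
    (eventually_abs_tailExponent_sub_le A₂ κ (sub_pos.2 hs))] with x hx hexponent
  have hx1 : 1 < x := one_lt_of_exp_one_le hx
  have hx0 : 0 < x := one_pos.trans hx1
  have hL := one_le_log_of_exp_one_le hx
  have hlower : -(s - A) * Real.log x ≤ -A₂ + tailExponent A₂ κ (Real.log x) := by
    have := le_of_abs_le (hexponent 1 le_rfl)
    rw [abs_sub_comm, abs_of_nonneg (sub_nonneg.2 hL), tailExponent, Real.sqrt_one,
      Real.log_one] at this
    linarith
  rw [Real.norm_of_nonneg (by positivity), Real.norm_of_nonneg (hestonTail_pos hx1).le]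
  calc x ^ (-s) = x ^ (-A) * Real.exp (-(s - A) * Real.log x) := by
        rw [mul_comm _ (Real.log x), ← Real.rpow_def_of_pos hx0, ← Real.rpow_add hx0]
        ring_nf
    _ ≤ x ^ (-A) * Real.exp (-A₂ + tailExponent A₂ κ (Real.log x)) := by gcongr
    _ = Real.exp (-A₂) * hestonTail A A₂ κ x := by
        rw [hestonTail_eq_rpow_mul_exp hx1, Real.exp_add]
        ring

lemma exists_abs_indicator_div_sub_hestonTail_le {U : ℝ → ℝ} {B : ℝ}
    (hU : (fun x => U x - B * hestonTail A A₂ κ x) =O[atTop] hestonTail A A₂ (κ - 1 / 2))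
    (hδ : 0 < δ) :
    ∃ X, 0 < X ∧ ∃ C, ∀ᶠ x in atTop, ∀ y, 0 < y →
      |(Set.Ici X).indicator U (x / y) - B * hestonTail A A₂ κ x * y ^ A| ≤
        C * hestonTail A A₂ (κ - 1 / 2) x * (y ^ A * Real.exp (δ * |Real.log y|)) := by
  obtain ⟨C₁, hC₁, hbound⟩ := hU.exists_pos
  obtain ⟨X, hX⟩ := eventually_atTop.1 (hbound.bound.and (eventually_ge_atTop (Real.exp 1)))
  have hX0 : 0 < X := one_pos.trans (one_lt_of_exp_one_le (hX X le_rfl).2)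
  refine ⟨X, hX0, max (C₁ + |B| * ((|A₂| + 2 * |κ|) / (δ / 2))) (|B| * (X ^ δ / δ)), ?_⟩
  filter_upwards [eventually_gt_atTop 1, eventually_hestonTail_div_le A A₂ (κ - 1 / 2) hδ,
    eventually_abs_hestonTail_div_sub_le A A₂ κ hδ,
    eventually_hestonTail_le_of_div_lt A A₂ κ hδ hX0]
    with x hx hpotter hdiff hnear y hy
  have hE := (hestonTail_pos (A := A) (A₂ := A₂) (κ := κ - 1 / 2) hx).le
  set E := hestonTail A A₂ (κ - 1 / 2) x
  set w := y ^ A * Real.exp (δ * |Real.log y|)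
  rcases le_or_gt X (x / y) with hxy | hxy
  · have hexp := (hX _ hxy).2
    have hexpansion := (hX _ hxy).1
    rw [Real.norm_of_nonneg (hestonTail_pos (one_lt_of_exp_one_le hexp)).le,
      Real.norm_eq_abs] at hexpansion
    rw [Set.indicator_of_mem (Set.mem_Ici.2 hxy)]
    calc |U (x / y) - B * hestonTail A A₂ κ x * y ^ A|
        = |(U (x / y) - B * hestonTail A A₂ κ (x / y)) +
            B * (hestonTail A A₂ κ (x / y) - hestonTail A A₂ κ x * y ^ A)| := by ring_nf
      _ ≤ C₁ * (E * w) + |B| * ((|A₂| + 2 * |κ|) / (δ / 2) * E * w) := by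
          refine (abs_add_le _ _).trans (add_le_add ?_ ?_)
          · exact hexpansion.trans (by gcongr; exact hpotter y hy hexp)
          · rw [abs_mul]
            gcongr
            exact hdiff y hy hexp
      _ = (C₁ + |B| * ((|A₂| + 2 * |κ|) / (δ / 2))) * E * w := by ring
      _ ≤ _ := by gcongr; exact le_max_left _ _
  · rw [Set.indicator_of_notMem (Set.notMem_Ici.2 hxy), zero_sub, abs_neg, abs_mul, abs_mul,
      abs_of_pos (hestonTail_pos hx), abs_of_pos (Real.rpow_pos_of_pos hy A)]
    calc |B| * hestonTail A A₂ κ x * y ^ A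
        ≤ |B| * (X ^ δ / δ * E * Real.exp (δ * |Real.log y|)) * y ^ A := by
          gcongr
          exact hnear y hy hxy
      _ = |B| * (X ^ δ / δ) * E * w := by ring
      _ ≤ _ := by gcongr; exact le_max_right _ _

end HestonTail

section MellinConvolution

open Set
open scoped Topology

/-- The integral defining `mellinConv f g x` converges absolutely; where it does not, `mellinConv`
is `0` by convention. -/
def MellinConvExistsAt (f g : ℝ → ℝ) (x : ℝ) : Prop :=
  IntegrableOn (fun t => f (x / t) * g t / t) (Ioi 0)

lemma mellinConv_add_left {f₁ f₂ g : ℝ → ℝ} {x : ℝ} (h₁ : MellinConvExistsAt f₁ g x)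
    (h₂ : MellinConvExistsAt f₂ g x) :
    mellinConv (f₁ + f₂) g x = mellinConv f₁ g x + mellinConv f₂ g x := by
  simp only [mellinConv, Pi.add_apply, add_mul, add_div]
  exact integral_add h₁ h₂

lemma abs_neg_one_mul_rpow_smul (f : ℝ → ℝ) (x y : ℝ) :
    (|(-1 : ℝ)| * y ^ ((-1 : ℝ) - 1)) • f (x * y ^ (-1 : ℝ)) = f (x / y) * y ^ (-2 : ℝ) := by
  rw [Real.rpow_neg_one, abs_neg, abs_one, one_mul, smul_eq_mul, mul_comm, ← div_eq_mul_inv,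
    show (-1 : ℝ) - 1 = -2 by norm_num]

lemma integrableOn_comp_div_mul_rpow_neg_two {f : ℝ → ℝ} (hf : IntegrableOn f (Ioi 0)) {x : ℝ}
    (hx : 0 < x) : IntegrableOn (fun y => f (x / y) * y ^ (-2 : ℝ)) (Ioi 0) := by
  have hscaled : IntegrableOn (fun z => f (x * z)) (Ioi 0) := by
    rwa [integrableOn_Ioi_comp_mul_left_iff f 0 hx, mul_zero]
  simpa only [abs_neg_one_mul_rpow_smul] using
    (integrableOn_Ioi_comp_rpow_iff _ (neg_ne_zero.2 one_ne_zero)).2 hscaled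

lemma integral_comp_div_mul_rpow_neg_two (f : ℝ → ℝ) {x : ℝ} (hx : 0 < x) :
    ∫ y in Ioi 0, f (x / y) * y ^ (-2 : ℝ) = x⁻¹ * ∫ y in Ioi 0, f y := by
  have hinv := integral_comp_rpow_Ioi (fun z => f (x * z)) (neg_ne_zero.2 one_ne_zero)
  simp only [abs_neg_one_mul_rpow_smul] at hinv
  rw [hinv, integral_comp_mul_left_Ioi f 0 hx, mul_zero, smul_eq_mul]

lemma aestronglyMeasurable_comp_div {f : ℝ → ℝ} (hf : IntegrableOn f (Ioi 0)) {x : ℝ}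
    (hx : 0 < x) : AEStronglyMeasurable (fun y => f (x / y)) (volume.restrict (Ioi 0)) := by
  have hsq : Measurable fun y : ℝ => y ^ (2 : ℝ) := by fun_prop
  refine ((integrableOn_comp_div_mul_rpow_neg_two hf hx).aestronglyMeasurable.mul
    hsq.aestronglyMeasurable).congr ?_
  filter_upwards [ae_restrict_mem measurableSet_Ioi] with y (hy : 0 < y)
  rw [Pi.mul_apply, mul_assoc, ← Real.rpow_add hy, neg_add_cancel, Real.rpow_zero, mul_one]

lemma aestronglyMeasurable_mellinConv_integrand {f g : ℝ → ℝ} {x : ℝ}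
    (hf : IntegrableOn f (Ioi 0)) (hg : AEStronglyMeasurable g (volume.restrict (Ioi 0)))
    (hx : 0 < x) :
    AEStronglyMeasurable (fun t => f (x / t) * g t / t) (volume.restrict (Ioi 0)) := by
  simp only [div_eq_mul_inv _ (_ : ℝ)]
  exact ((aestronglyMeasurable_comp_div hf hx).mul hg).mul measurable_inv.aestronglyMeasurable

lemma integrableOn_rpow_mul_exp_abs_log_mul {g : ℝ → ℝ} {A b s δ : ℝ}
    (hg : LocallyIntegrableOn g (Ioi 0)) (htop : g =O[atTop] fun y => y ^ (-s)) (hs : A + δ < s)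
    (hzero : g =O[𝓝[>] 0] fun y => y ^ (-b)) (hb : b < A - δ) :
    IntegrableOn (fun y => y ^ (A - 1) * (Real.exp (δ * |Real.log y|) * g y)) (Ioi 0) := by
  refine mellin_convergent_of_isBigO_scalar (a := s - δ) (b := b + δ) ?_ ?_ (by linarith) ?_
    (by linarith)
  · have hlog : ContinuousOn Real.log (Ioi 0) :=
      Real.continuousOn_log.mono fun y hy => (mem_Ioi.1 hy).ne'
    exact hg.continuousOn_mul (by fun_prop) isOpen_Ioi.isLocallyClosed
  · refine ((isBigO_refl (fun y : ℝ => Real.exp (δ * |Real.log y|)) atTop).mul htop).congr' .rfl ?_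
    filter_upwards [eventually_ge_atTop 1] with y hy
    have hy0 : 0 < y := one_pos.trans_le hy
    rw [abs_of_nonneg (Real.log_nonneg hy), mul_comm δ, ← Real.rpow_def_of_pos hy0,
      ← Real.rpow_add hy0]
    ring_nf
  · refine ((isBigO_refl (fun y : ℝ => Real.exp (δ * |Real.log y|)) _).mul hzero).congr' .rfl ?_
    filter_upwards [Ioc_mem_nhdsGT one_pos] with y hy
    rw [abs_of_nonpos (Real.log_nonpos hy.1.le hy.2), mul_neg, ← neg_mul, mul_comm (-δ),
      ← Real.rpow_def_of_pos hy.1, ← Real.rpow_add hy.1]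
    ring_nf

lemma mellinConv_sub_mul_moment_le {f g w : ℝ → ℝ} {A F E x : ℝ}
    (hmeas : AEStronglyMeasurable (fun y => f (x / y) * g y / y) (volume.restrict (Ioi 0)))
    (hmoment : IntegrableOn (fun y => y ^ (A - 1) * g y) (Ioi 0))
    (hweighted : IntegrableOn (fun y => y ^ (A - 1) * (w y * g y)) (Ioi 0))
    (hbound : ∀ y, 0 < y → |f (x / y) - F * y ^ A| ≤ E * (y ^ A * w y)) :
    MellinConvExistsAt f g x ∧
      |mellinConv f g x - F * ∫ y in Ioi 0, y ^ (A - 1) * g y| ≤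
        |E| * ∫ y in Ioi 0, |y ^ (A - 1) * (w y * g y)| := by
  have hdom : ∀ᵐ y ∂volume.restrict (Ioi 0),
      ‖f (x / y) * g y / y - F * (y ^ (A - 1) * g y)‖ ≤
        |E| * |y ^ (A - 1) * (w y * g y)| := by
    filter_upwards [ae_restrict_mem measurableSet_Ioi] with y (hy : 0 < y)
    calc ‖f (x / y) * g y / y - F * (y ^ (A - 1) * g y)‖
        = |f (x / y) - F * y ^ A| * |g y / y| := by
          rw [← abs_mul, Real.norm_eq_abs, Real.rpow_sub_one hy.ne']
          field_simp
      _ ≤ |E * (y ^ A * w y)| * |g y / y| :=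
          mul_le_mul_of_nonneg_right ((hbound y hy).trans (le_abs_self _)) (abs_nonneg _)
      _ = |E| * |y ^ (A - 1) * (w y * g y)| := by
          rw [← abs_mul, ← abs_mul, Real.rpow_sub_one hy.ne']
          field_simp
  have hdiff := (hweighted.abs.const_mul |E|).mono'
    (hmeas.sub (hmoment.const_mul F).aestronglyMeasurable) hdom
  have hexists : MellinConvExistsAt f g x :=
    (hdiff.add (hmoment.const_mul F)).congr (.of_forall fun y => sub_add_cancel _ _)
  refine ⟨hexists, ?_⟩
  rw [mellinConv, ← integral_const_mul, ← integral_const_mul,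
    ← integral_sub hexists (hmoment.const_mul F)]
  exact norm_integral_le_of_norm_le (hweighted.abs.const_mul |E|) hdom

lemma mellinConv_sub_mul_moment_isBigO {f g w F E : ℝ → ℝ} {A : ℝ} (hf : IntegrableOn f (Ioi 0))
    (hg : AEStronglyMeasurable g (volume.restrict (Ioi 0)))
    (hmoment : IntegrableOn (fun y => y ^ (A - 1) * g y) (Ioi 0))
    (hweighted : IntegrableOn (fun y => y ^ (A - 1) * (w y * g y)) (Ioi 0))
    (hbound : ∀ᶠ x in atTop, ∀ y, 0 < y → |f (x / y) - F x * y ^ A| ≤ E x * (y ^ A * w y)) :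
    (∀ᶠ x in atTop, MellinConvExistsAt f g x) ∧
      (fun x => mellinConv f g x - F x * ∫ y in Ioi 0, y ^ (A - 1) * g y) =O[atTop] E := by
  have h : ∀ᶠ x in atTop, MellinConvExistsAt f g x ∧
      |mellinConv f g x - F x * ∫ y in Ioi 0, y ^ (A - 1) * g y| ≤
        |E x| * ∫ y in Ioi 0, |y ^ (A - 1) * (w y * g y)| := by
    filter_upwards [hbound, eventually_gt_atTop 0] with x hbound hx
    exact mellinConv_sub_mul_moment_le (aestronglyMeasurable_mellinConv_integrand hf hg hx)
      hmoment hweighted hbound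
  refine ⟨h.mono fun _ hx => hx.1, .of_bound (∫ y in Ioi 0, |y ^ (A - 1) * (w y * g y)|) ?_⟩
  exact h.mono fun _ hx => hx.2.trans_eq (mul_comm _ _)

lemma exists_norm_mellinConv_integrand_le {f g : ℝ → ℝ} {s X : ℝ} (hX : 0 < X)
    (hsupport : ∀ z, X ≤ z → f z = 0) (htop : g =O[atTop] fun y => y ^ (-s)) (hs : 1 ≤ s) :
    ∃ C, ∀ᶠ x in atTop, ∀ y, 0 < y →
      ‖f (x / y) * g y / y‖ ≤ C * (x / X) ^ (1 - s) * (|f (x / y)| * y ^ (-2 : ℝ)) := by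
  obtain ⟨C, hC, hbound⟩ := htop.exists_pos
  obtain ⟨Y, hY⟩ := eventually_atTop.1 hbound.bound
  refine ⟨C, ?_⟩
  filter_upwards [eventually_gt_atTop 0, eventually_ge_atTop (Y * X)] with x hx hxY y hy
  rcases le_or_gt X (x / y) with hxy | hxy
  · rw [hsupport _ hxy]
    simp only [zero_mul, zero_div, norm_zero, abs_zero, mul_zero, le_refl]
  have hyx : x / X ≤ y := ((div_lt_comm₀ hy hX).1 hxy).le
  have hgy := hY y (((le_div_iff₀ hX).2 hxY).trans hyx)
  rw [Real.norm_of_nonneg (by positivity : 0 ≤ y ^ (-s))] at hgy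
  calc ‖f (x / y) * g y / y‖ = |f (x / y)| * (‖g y‖ / y) := by
        rw [norm_div, norm_mul, Real.norm_of_nonneg hy.le, mul_div_assoc, Real.norm_eq_abs]
    _ ≤ |f (x / y)| * (C * y ^ (-s) / y) := by gcongr
    _ = C * y ^ (1 - s) * (|f (x / y)| * y ^ (-2 : ℝ)) := by
        rw [mul_div_assoc, ← Real.rpow_sub_one hy.ne', show -s - 1 = 1 - s + -2 by ring,
          Real.rpow_add hy]
        ring
    _ ≤ C * (x / X) ^ (1 - s) * (|f (x / y)| * y ^ (-2 : ℝ)) := by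
        gcongr ?_ * ?_ * _
        exact Real.rpow_le_rpow_of_nonpos (by positivity) hyx (by linarith)

lemma mellinConv_isBigO_of_support_bddAbove {f g : ℝ → ℝ} {s X : ℝ}
    (hf : IntegrableOn f (Ioi 0)) (hX : 0 < X) (hsupport : ∀ z, X ≤ z → f z = 0)
    (hg : AEStronglyMeasurable g (volume.restrict (Ioi 0)))
    (htop : g =O[atTop] fun y => y ^ (-s)) (hs : 1 ≤ s) :
    (∀ᶠ x in atTop, MellinConvExistsAt f g x) ∧ mellinConv f g =O[atTop] fun x => x ^ (-s) := by
  obtain ⟨C, hC⟩ := exists_norm_mellinConv_integrand_le hX hsupport htop hs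
  have hdom : ∀ᶠ x in atTop, 0 < x ∧ ∀ᵐ y ∂volume.restrict (Ioi 0),
      ‖f (x / y) * g y / y‖ ≤ C * (x / X) ^ (1 - s) * (|f (x / y)| * y ^ (-2 : ℝ)) :=
    (eventually_gt_atTop 0).and <| hC.mono fun x hx =>
      (ae_restrict_mem measurableSet_Ioi).mono hx
  constructor
  · filter_upwards [hdom] with x ⟨hx, hle⟩
    exact ((integrableOn_comp_div_mul_rpow_neg_two hf.abs hx).const_mul _).mono'
      (aestronglyMeasurable_mellinConv_integrand hf hg hx) hle
  · refine .of_bound (C * X ^ (s - 1) * ∫ y in Ioi 0, |f y|) ?_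
    filter_upwards [hdom] with x ⟨hx, hle⟩
    rw [Real.norm_of_nonneg (by positivity : 0 ≤ x ^ (-s))]
    calc ‖mellinConv f g x‖
        ≤ ∫ y in Ioi 0, C * (x / X) ^ (1 - s) * (|f (x / y)| * y ^ (-2 : ℝ)) :=
          norm_integral_le_of_norm_le
            ((integrableOn_comp_div_mul_rpow_neg_two hf.abs hx).const_mul _) hle
      _ = C * (x / X) ^ (1 - s) * (x⁻¹ * ∫ y in Ioi 0, |f y|) := by
          rw [integral_const_mul, integral_comp_div_mul_rpow_neg_two (fun z => |f z|) hx]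
      _ = C * X ^ (s - 1) * (∫ y in Ioi 0, |f y|) * x ^ (-s) := by
          rw [Real.div_rpow hx.le hX.le, div_eq_mul_inv, ← Real.rpow_neg hX.le, neg_sub,
            sub_eq_neg_add 1 s, Real.rpow_add_one hx.ne']
          field_simp

lemma mellinConv_sub_hestonTail_isBigO {U g : ℝ → ℝ} {B A A₂ κ b s : ℝ}
    (hU : IntegrableOn U (Ioi 0))
    (htail : (fun x => U x - B * hestonTail A A₂ κ x) =O[atTop] hestonTail A A₂ (κ - 1 / 2))
    (hg : LocallyIntegrableOn g (Ioi 0)) (hs : 1 ≤ s) (hAs : A < s)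
    (htop : g =O[atTop] fun y => y ^ (-s)) (hbA : b < A)
    (hzero : g =O[𝓝[>] 0] fun y => y ^ (-b)) :
    (fun x => mellinConv U g x - B * hestonTail A A₂ κ x * ∫ y in Ioi 0, y ^ (A - 1) * g y)
      =O[atTop] hestonTail A A₂ (κ - 1 / 2) := by
  obtain ⟨δ, hδ, hδmin⟩ := exists_between (lt_min (sub_pos.2 hAs) (sub_pos.2 hbA))
  rw [lt_min_iff] at hδmin
  have hmeas := hg.aestronglyMeasurable
  have hmoment := mellin_convergent_of_isBigO_scalar hg htop hAs hzero hbA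
  have hweighted := integrableOn_rpow_mul_exp_abs_log_mul (δ := δ) (A := A) hg htop (by linarith)
    hzero (by linarith)
  obtain ⟨X, hX, C, hfar⟩ := exists_abs_indicator_div_sub_hestonTail_le htail hδ
  obtain ⟨hfar_exists, hfar_isBigO⟩ := mellinConv_sub_mul_moment_isBigO
    (hU.indicator measurableSet_Ici) hmeas hmoment hweighted hfar
  obtain ⟨hnear_exists, hnear_isBigO⟩ := mellinConv_isBigO_of_support_bddAbove
    (hU.indicator measurableSet_Ici.compl) hX
    (fun z hz => indicator_of_notMem (notMem_compl_iff.2 hz) U) hmeas htop hs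
  refine ((hfar_isBigO.trans (isBigO_const_mul_self C _ _)).add
    (hnear_isBigO.trans (rpow_neg_isBigO_hestonTail hAs))).congr' ?_ .rfl
  filter_upwards [hfar_exists, hnear_exists] with x hfar_x hnear_x
  rw [sub_add_eq_add_sub, ← mellinConv_add_left hfar_x hnear_x, indicator_self_add_compl]

end MellinConvolution

lemma sub_isBigO_mul_log_rpow_iff_hestonTail {f : ℝ → ℝ} {c A A₂ κ : ℝ} (hc : c ≠ 0) :
    (fun x => f x - c * x ^ (-A) * Real.exp (A₂ * √(Real.log x)) * Real.log x ^ κ) =O[atTop]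
        (fun x => c * x ^ (-A) * Real.exp (A₂ * √(Real.log x)) * Real.log x ^ κ *
          Real.log x ^ (-(1 : ℝ) / 2)) ↔
      (fun x => f x - c * hestonTail A A₂ κ x) =O[atTop] hestonTail A A₂ (κ - 1 / 2) := by
  have hprofile (x : ℝ) : c * x ^ (-A) * Real.exp (A₂ * √(Real.log x)) * Real.log x ^ κ =
      c * hestonTail A A₂ κ x := by
    rw [hestonTail]
    ring
  have herror : (fun x => c * hestonTail A A₂ κ x * Real.log x ^ (-(1 : ℝ) / 2)) =ᶠ[atTop]
      fun x => c * hestonTail A A₂ (κ - 1 / 2) x := by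
    filter_upwards [eventually_gt_atTop 1] with x hx
    rw [hestonTail_sub hx, mul_assoc, neg_div]
  simp only [hprofile]
  rw [isBigO_congr .rfl herror, isBigO_const_mul_right_iff hc]

theorem density_asymptotics_heston_dominates_at_infinity_general
    {t lam η₁ η₂ p q : ℝ} {U : ℝ → ℝ} {B₁ A₂ A₃ κ : ℝ}
    (hlt : 0 ≤ lam * t) (hη₁ : 0 < η₁) (hη₂ : 0 < η₂)
    (hp : 0 ≤ p) (hq : 0 ≤ q) (hpq : p + q = 1) (hB₁ : B₁ ≠ 0)
    (hA₃ : 1 < A₃ + η₂) (hdom : A₃ < 1 + η₁) (hU : IntegrableOn U (Set.Ioi 0))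
    (hU_infty : (fun x => U x -
        B₁ * x ^ (-A₃) * Real.exp (A₂ * Real.sqrt (Real.log x)) * (Real.log x) ^ κ)
      =O[atTop] (fun x =>
        B₁ * x ^ (-A₃) * Real.exp (A₂ * Real.sqrt (Real.log x)) * (Real.log x) ^ κ *
          (Real.log x) ^ (-(1 : ℝ) / 2))) :
    IntegrableOn (fun x => x ^ (A₃ - 1) * Hfun lam t η₁ η₂ p q x) (Set.Ioi 0) ∧
    (fun x => (Real.exp (-(lam * t)) * U x +
        mellinConv U (Hfun lam t η₁ η₂ p q) x) -
        (Real.exp (-(lam * t)) +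
            ∫ y in Set.Ioi (0 : ℝ), y ^ (A₃ - 1) * Hfun lam t η₁ η₂ p q y) *
          B₁ * x ^ (-A₃) * Real.exp (A₂ * Real.sqrt (Real.log x)) * (Real.log x) ^ κ)
      =O[atTop]
      (fun x =>
        (Real.exp (-(lam * t)) +
            ∫ y in Set.Ioi (0 : ℝ), y ^ (A₃ - 1) * Hfun lam t η₁ η₂ p q y) *
          B₁ * x ^ (-A₃) * Real.exp (A₂ * Real.sqrt (Real.log x)) * (Real.log x) ^ κ *
          (Real.log x) ^ (-(1 : ℝ) / 2)) := by
  obtain ⟨ε, hε, hεmin⟩ : ∃ ε, 0 < ε ∧ ε < min η₁ (min (1 + η₁ - A₃) (A₃ + η₂ - 1)) :=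
    exists_between (lt_min hη₁ (lt_min (by linarith) (by linarith)))
  obtain ⟨hεη, hεtop, hεzero⟩ : ε < η₁ ∧ ε < 1 + η₁ - A₃ ∧ ε < A₃ + η₂ - 1 := by
    simpa only [lt_min_iff] using hεmin
  have hloc := locallyIntegrableOn_Hfun hlt hη₁ hη₂ hp hq hpq
  have htop := Hfun_isBigO_atTop hlt hη₁ hη₂ hp hq hpq hε
  have hzero := Hfun_isBigO_nhdsGT_zero hlt hη₁ hη₂ hp hq hpq hε
  have hm : 0 ≤ ∫ y in Set.Ioi (0 : ℝ), y ^ (A₃ - 1) * Hfun lam t η₁ η₂ p q y :=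
    setIntegral_nonneg measurableSet_Ioi fun y (hy : 0 < y) =>
      mul_nonneg (by positivity) (Hfun_nonneg hlt hη₁ hη₂ hp hq hy)
  have hU_tail := (sub_isBigO_mul_log_rpow_iff_hestonTail hB₁).1 hU_infty
  have hconv := mellinConv_sub_hestonTail_isBigO hU hU_tail hloc (by linarith) (by linarith) htop
    (by linarith) hzero
  refine ⟨mellin_convergent_of_isBigO_scalar hloc htop (by linarith) hzero (by linarith),
    (sub_isBigO_mul_log_rpow_iff_hestonTail (mul_ne_zero (by positivity) hB₁)).2 ?_⟩
  refine ((hU_tail.const_mul_left (Real.exp (-(lam * t)))).add hconv).congr_left fun x => ?_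
  ring

/-- Theorem: density asymptotics at infinity when the Heston part
dominates, `1 + η₁ > A₃`.  Let `U` be a probability density on `(0,∞)` with the
Heston-type asymptotics at infinity and zero, and let
`D(x) = e^{−λt} U(x) + (U ⋆_M H(t,·))(x)`.  Then the moment `m_{A₃−1}(H(t,·))` is
finite and
`D(x) = [e^{−λt} + m_{A₃−1}(H(t,·))] B₁ x^{−A₃} exp{A₂√(log x)} (log x)^κ`
`· (1 + O((log x)^{−1/2}))` as `x → ∞`. -/
theorem density_asymptotics_heston_dominates_at_infinity
    (t lam η₁ η₂ p q : ℝ) (U : ℝ → ℝ) (B₁ Bt₁ A₂ At₂ A₃ At₃ κ : ℝ)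
    (ht : 0 < t) (hlam : 0 < lam) (hη₁ : 1 < η₁) (hη₂ : 0 < η₂)
    (hp : 0 < p) (hq : 0 < q) (hpq : p + q = 1)
    (hB₁ : 0 < B₁) (hBt₁ : 0 < Bt₁) (hA₃ : 2 < A₃) (hAt₃ : -1 < At₃)
    (hdom : A₃ < 1 + η₁)
    (hU_meas : Measurable U) (hU_nonneg : ∀ x, 0 ≤ U x)
    (hU_prob : (∫ x in Set.Ioi (0:ℝ), U x) = 1)
    -- `U(x) = B₁ x^{−A₃} exp{A₂√(log x)} (log x)^κ (1 + O((log x)^{−1/2}))` as `x → ∞`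
    (hU_infty : (fun x => U x -
        B₁ * x ^ (-A₃) * Real.exp (A₂ * Real.sqrt (Real.log x)) * (Real.log x) ^ κ)
      =O[atTop] (fun x =>
        B₁ * x ^ (-A₃) * Real.exp (A₂ * Real.sqrt (Real.log x)) * (Real.log x) ^ κ *
          (Real.log x) ^ (-(1:ℝ)/2)))
    -- `U(x) = B̃₁ x^{Ã₃} exp{Ã₂√(log(1/x))} (log(1/x))^κ (1 + O((log(1/x))^{−1/2}))` as `x → 0`
    (hU_zero : (fun x => U x -
        Bt₁ * x ^ At₃ * Real.exp (At₂ * Real.sqrt (Real.log x⁻¹)) * (Real.log x⁻¹) ^ κ)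
      =O[nhdsWithin 0 (Set.Ioi 0)] (fun x =>
        Bt₁ * x ^ At₃ * Real.exp (At₂ * Real.sqrt (Real.log x⁻¹)) * (Real.log x⁻¹) ^ κ *
          (Real.log x⁻¹) ^ (-(1:ℝ)/2))) :
    MeasureTheory.IntegrableOn
      (fun x => x ^ (A₃ - 1) * Hfun lam t η₁ η₂ p q x) (Set.Ioi 0) ∧
    (fun x => (Real.exp (-(lam * t)) * U x +
        mellinConv U (Hfun lam t η₁ η₂ p q) x) -
        (Real.exp (-(lam * t)) +
            ∫ y in Set.Ioi (0:ℝ), y ^ (A₃ - 1) * Hfun lam t η₁ η₂ p q y) *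
          B₁ * x ^ (-A₃) * Real.exp (A₂ * Real.sqrt (Real.log x)) * (Real.log x) ^ κ)
      =O[atTop]
      (fun x =>
        (Real.exp (-(lam * t)) +
            ∫ y in Set.Ioi (0:ℝ), y ^ (A₃ - 1) * Hfun lam t η₁ η₂ p q y) *
          B₁ * x ^ (-A₃) * Real.exp (A₂ * Real.sqrt (Real.log x)) * (Real.log x) ^ κ *
          (Real.log x) ^ (-(1:ℝ)/2)) := by
  have hU : IntegrableOn U (Set.Ioi 0) := .of_integral_ne_zero (hU_prob.trans_ne one_ne_zero)
  exact density_asymptotics_heston_dominates_at_infinity_general (mul_pos hlam ht).le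
    (one_pos.trans hη₁) hη₂ hp.le hq.le hpq hB₁.ne' (by linarith) hdom hU hU_infty
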